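/- Every odd indefinite unimodular symmetric bilinear form over ℤ is isomorphic to a diagonal form p⟨1⟩ ⊕ q⟨−1⟩ for some non-negative integers p, q. -/

import Mathlib

/-!
Let `p` be a prime and suppose the class of a unimodular form `A` in the Witt group of `ℚ` is a
sum of classes `⟨a⟩` with all prime factors of `a` at most `p`. Reducing the `a` divisible by `p`
modulo `p`, one can write `[A] = ∑ ⟨dᵢ⟩ + ∑ ⟨p cⱼ⟩` with `dᵢ` having only prime factors below `p`
and `∑ cⱼ yⱼ²` anisotropic over `𝔽_p` (Tate's filtration argument). A Lagrangian of
`A ⊕ ⟨-dᵢ⟩ ⊕ ⟨-p cⱼ⟩`, intersected with the integral lattice, then consists of vectors whose last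
coordinates vanish modulo `p`, so its reduction modulo `p` is too large unless there are no `cⱼ`.
Descending through the primes, `[A]` is an integral multiple of `⟨1⟩`. Comparing signs,
an indefinite unimodular form therefore represents zero.

A primitive isotropic vector `x` has a partner `y` with `B x y = 1`, and in an odd lattice `B y y`
can be made odd. The span of `x` and `y` is then `⟨1⟩ ⊕ ⟨-1⟩`. Splitting off one of these two
summands, chosen so that the complement stays indefinite, reduces the rank by one.
-/
/-! ### Metabolic quadratic forms -/

section Metabolic

open Module Submodule QuadraticMap

variable {K V V' : Type*} [Field K] [AddCommGroup V] [Module K V] [AddCommGroup V'] [Module K V']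

lemma finrank_map_add_finrank_inf_ker [FiniteDimensional K V] (f : V →ₗ[K] V')
    (X : Submodule K V) :
    finrank K (X.map f) + finrank K ↥(X ⊓ LinearMap.ker f) = finrank K X := by
  rw [← LinearMap.finrank_range_add_finrank_ker (f.domRestrict X), LinearMap.range_domRestrict,
    LinearMap.ker_domRestrict, ← Submodule.finrank_map_subtype_eq X ((LinearMap.ker f).comap _),
    Submodule.map_comap_subtype]

/-- A quadratic form is metabolic if it vanishes on a subspace of at least half the dimension.
Nondegeneracy is not part of the definition; metabolic nondegenerate forms are those
representing zero in the Witt group. -/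
def IsMetabolic (Q : QuadraticForm K V) : Prop :=
  ∃ X : Submodule K V, (∀ x ∈ X, Q x = 0) ∧ finrank K V ≤ 2 * finrank K X

namespace IsMetabolic

variable {Q : QuadraticForm K V} {Q' : QuadraticForm K V'}

lemma of_equivalent (h : IsMetabolic Q) (e : Q.Equivalent Q') : IsMetabolic Q' := by
  obtain ⟨e⟩ := e
  obtain ⟨X, hX, hdim⟩ := h
  refine ⟨X.map (e.toLinearEquiv : V →ₗ[K] V'), ?_, ?_⟩
  · rintro _ ⟨x, hx, rfl⟩
    exact (e.map_app x).trans (hX x hx)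
  · rwa [LinearEquiv.finrank_map_eq, ← e.toLinearEquiv.finrank_eq]

lemma neg (h : IsMetabolic Q) : IsMetabolic (-Q) :=
  let ⟨X, hX, hdim⟩ := h
  ⟨X, fun x hx => by rw [neg_apply, hX x hx, neg_zero], hdim⟩

lemma prod [FiniteDimensional K V] [FiniteDimensional K V'] (h : IsMetabolic Q)
    (h' : IsMetabolic Q') : IsMetabolic (Q.prod Q') := by
  obtain ⟨X, hX, hdim⟩ := h
  obtain ⟨X', hX', hdim'⟩ := h'
  refine ⟨LinearMap.range (X.subtype.prodMap X'.subtype), ?_, ?_⟩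
  · rintro _ ⟨x, rfl⟩
    simp [hX, hX']
  · rw [LinearMap.finrank_range_of_inj (X.subtype_injective.prodMap X'.subtype_injective),
      finrank_prod, finrank_prod]
    lia

lemma prod_neg [FiniteDimensional K V] (Q : QuadraticForm K V) : IsMetabolic (Q.prod (-Q)) := by
  refine ⟨LinearMap.range (LinearMap.prod LinearMap.id LinearMap.id), ?_, ?_⟩
  · rintro _ ⟨x, rfl⟩
    simp
  · rw [LinearMap.finrank_range_of_inj fun x y h => congrArg Prod.fst h, finrank_prod, two_mul]

end IsMetabolic

lemma polar_eq_zero_of_isotropic {Q : QuadraticForm K V} {X : Submodule K V}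
    (hX : ∀ x ∈ X, Q x = 0) {x y : V} (hx : x ∈ X) (hy : y ∈ X) : polar Q x y = 0 := by
  rw [polar, hX _ (X.add_mem hx hy), hX x hx, hX y hy, sub_zero, sub_zero]

section Cancellation

variable [FiniteDimensional K V] [FiniteDimensional K V'] {Q : QuadraticForm K V}
  {Q' : QuadraticForm K V'}

/-- The reduction of `X` by `Y` is `{v | ∃ y ∈ Y, (v, y) ∈ X}`. -/
lemma le_finrank_reduction (hQ' : Q'.polarBilin.Nondegenerate)
    {X : Submodule K (V × V')} (hX : ∀ x ∈ X, Q.prod Q' x = 0)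
    {Y : Submodule K V'} (hY : ∀ y ∈ Y, Q' y = 0) :
    finrank K X + finrank K Y ≤
      finrank K ((X ⊓ Y.comap (LinearMap.snd K V V')).map (LinearMap.fst K V V')) +
        finrank K V' := by
  set X' := X ⊓ Y.comap (LinearMap.snd K V V') with hX'
  set C := (X' ⊓ LinearMap.ker (LinearMap.fst K V V')).map (LinearMap.snd K V V')
  have hCX : X.map (LinearMap.snd K V V') ⊔ Y ≤ LinearMap.BilinForm.orthogonal Q'.polarBilin C := by
    refine sup_le ?_ fun y hy => ?_
    · rintro _ ⟨x, hx, rfl⟩ _ ⟨c, hc, rfl⟩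
      have hc0 : c.1 = 0 := hc.2
      have := polar_eq_zero_of_isotropic hX hc.1.1 hx
      rwa [polar_prod, hc0, polar_zero_left, zero_add] at this
    · rintro _ ⟨c, hc, rfl⟩
      exact polar_eq_zero_of_isotropic hY hc.1.2 hy
  have hdimC : finrank K C = finrank K ↥(X' ⊓ LinearMap.ker (LinearMap.fst K V V')) := by
    have h := finrank_map_add_finrank_inf_ker (LinearMap.snd K V V')
      (X' ⊓ LinearMap.ker (LinearMap.fst K V V'))
    have h0 : X' ⊓ LinearMap.ker (LinearMap.fst K V V') ⊓
        LinearMap.ker (LinearMap.snd K V V') = ⊥ :=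
      eq_bot_iff.mpr fun x hx => Prod.ext hx.1.2 hx.2
    rwa [h0, finrank_bot, add_zero] at h
  have hmap : X'.map (LinearMap.snd K V V') = X.map (LinearMap.snd K V V') ⊓ Y :=
    map_inf_eq_map_inf_comap.symm
  have hker : X' ⊓ LinearMap.ker (LinearMap.snd K V V') =
      X ⊓ LinearMap.ker (LinearMap.snd K V V') := by
    rw [hX', inf_assoc, inf_eq_right.mpr (LinearMap.ker_le_comap _)]
  have h₁ := finrank_map_add_finrank_inf_ker (LinearMap.snd K V V') X
  have h₂ := finrank_map_add_finrank_inf_ker (LinearMap.snd K V V') X'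
  have h₃ := finrank_map_add_finrank_inf_ker (LinearMap.fst K V V') X'
  have h₄ := finrank_sup_add_finrank_inf_eq (X.map (LinearMap.snd K V V')) Y
  have h₅ := finrank_mono hCX
  rw [LinearMap.BilinForm.finrank_orthogonal hQ'] at h₅
  have h₆ := C.finrank_le
  rw [hmap, hker] at h₂
  lia

lemma IsMetabolic.of_prod (h : IsMetabolic (Q.prod Q')) (h' : IsMetabolic Q')
    (hQ' : Q'.polarBilin.Nondegenerate) : IsMetabolic Q := by
  obtain ⟨X, hX, hdim⟩ := h
  obtain ⟨Y, hY, hdim'⟩ := h'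
  refine ⟨(X ⊓ Y.comap (LinearMap.snd K V V')).map (LinearMap.fst K V V'), ?_, ?_⟩
  · rintro _ ⟨x, ⟨hxX, hxY⟩, rfl⟩
    have := hX x hxX
    rwa [QuadraticMap.prod_apply, hY x.2 hxY, add_zero] at this
  · have := le_finrank_reduction hQ' hX hY
    rw [finrank_prod] at hdim
    lia

end Cancellation

end Metabolic

/-! ### The Witt group -/

section WittGroup

open Module QuadraticMap

universe u

section Nondegenerate

variable {R M M' : Type*} [CommRing R] [AddCommGroup M] [Module R M] [AddCommGroup M'] [Module R M']
  {Q : QuadraticForm R M} {Q' : QuadraticForm R M'}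

lemma polarBilin_nondegenerate_iff :
    Q.polarBilin.Nondegenerate ↔ ∀ x, (∀ y, polar Q x y = 0) → x = 0 :=
  LinearMap.IsRefl.nondegenerate_iff_separatingLeft fun x y h => (polar_comm Q y x).trans h

lemma polarBilin_neg_nondegenerate (h : Q.polarBilin.Nondegenerate) :
    (-Q).polarBilin.Nondegenerate := by
  rw [polarBilin_nondegenerate_iff] at h ⊢
  exact fun x hx => h x fun y => by simpa [polar_neg] using hx y

lemma polarBilin_prod_nondegenerate (h : Q.polarBilin.Nondegenerate)
    (h' : Q'.polarBilin.Nondegenerate) : (Q.prod Q').polarBilin.Nondegenerate := by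
  rw [polarBilin_nondegenerate_iff] at h h' ⊢
  exact fun x hx => Prod.ext (h _ fun y => by simpa using hx (y, 0))
    (h' _ fun y => by simpa using hx (0, y))

lemma neg_prod_eq_prod_neg : -(Q.prod Q') = (-Q).prod (-Q') := by
  ext x
  simp [add_comm]

end Nondegenerate

lemma IsMetabolic.trans {K V₁ V₂ V₃ : Type*} [Field K] [AddCommGroup V₁] [Module K V₁]
    [FiniteDimensional K V₁] [AddCommGroup V₂] [Module K V₂] [FiniteDimensional K V₂]
    [AddCommGroup V₃] [Module K V₃] [FiniteDimensional K V₃] {Q₁ : QuadraticForm K V₁}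
    {Q₂ : QuadraticForm K V₂} {Q₃ : QuadraticForm K V₃} (h₂ : Q₂.polarBilin.Nondegenerate)
    (h : IsMetabolic (Q₁.prod (-Q₂))) (h' : IsMetabolic (Q₂.prod (-Q₃))) :
    IsMetabolic (Q₁.prod (-Q₃)) := by
  have h'' : IsMetabolic ((-Q₃).prod Q₂) := h'.of_equivalent ⟨.prodComm _ _⟩
  have hsum : IsMetabolic ((Q₁.prod (-Q₃)).prod ((-Q₂).prod Q₂)) :=
    (h.prod h'').of_equivalent ⟨.prodProdProdComm _ _ _ _⟩
  exact hsum.of_prod ((IsMetabolic.prod_neg Q₂).of_equivalent ⟨.prodComm _ _⟩)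
    (polarBilin_prod_nondegenerate (polarBilin_neg_nondegenerate h₂) h₂)

/-- A finite-dimensional vector space with a quadratic form whose polar form is nondegenerate,
bundled so that the Witt group can be formed as a quotient. -/
structure QuadraticSpace (K : Type u) [Field K] where
  carrier : Type u
  [addCommGroup : AddCommGroup carrier]
  [module : Module K carrier]
  [finiteDimensional : FiniteDimensional K carrier]
  form : QuadraticForm K carrier
  nondegenerate : form.polarBilin.Nondegenerate

namespace QuadraticSpace

variable {K : Type u} [Field K]

attribute [instance] addCommGroup module finiteDimensional

/-- The orthogonal sum of two quadratic spaces. -/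
def prod (Q Q' : QuadraticSpace K) : QuadraticSpace K where
  carrier := Q.carrier × Q'.carrier
  form := Q.form.prod Q'.form
  nondegenerate := polarBilin_prod_nondegenerate Q.nondegenerate Q'.nondegenerate

/-- The quadratic space with the opposite form. -/
def neg (Q : QuadraticSpace K) : QuadraticSpace K where
  carrier := Q.carrier
  form := -Q.form
  nondegenerate := polarBilin_neg_nondegenerate Q.nondegenerate

/-- Witt equivalence: `Q ∼ Q'` if `Q ⊥ -Q'` is metabolic. -/
instance wittSetoid (K : Type u) [Field K] : Setoid (QuadraticSpace K) where
  r Q Q' := IsMetabolic (Q.form.prod (-Q'.form))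
  iseqv :=
    { refl := fun Q => .prod_neg Q.form
      symm := fun {Q Q'} h => by
        have := h.neg
        rw [neg_prod_eq_prod_neg, neg_neg] at this
        exact this.of_equivalent ⟨.prodComm _ _⟩
      trans := fun {_ Q' _} h h' => h.trans Q'.nondegenerate h' }

variable {Q Q' : QuadraticSpace K}

lemma equiv_of_equivalent (h : Q.form.Equivalent Q'.form) : Q ≈ Q' := by
  obtain ⟨e⟩ := h
  exact (IsMetabolic.prod_neg Q.form).of_equivalent <|
    .prod (.refl _) ⟨e.toLinearEquiv, fun x => congrArg Neg.neg (e.map_app x)⟩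

lemma equiv_of_isMetabolic (h : IsMetabolic Q.form) (h' : IsMetabolic Q'.form) : Q ≈ Q' :=
  h.prod h'.neg

end QuadraticSpace

/-- The Witt group of a field: nondegenerate quadratic spaces up to Witt equivalence. -/
def WittGroup (K : Type u) [Field K] : Type (u + 1) :=
  Quotient (QuadraticSpace.wittSetoid K)

namespace WittGroup

open QuadraticSpace

variable {K : Type u} [Field K]

instance : Add (WittGroup K) where
  add := Quotient.map₂ QuadraticSpace.prod fun Q R h Q' R' h' => by
    have : IsMetabolic ((Q.form.prod Q'.form).prod (-(R.form.prod R'.form))) := by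
      rw [neg_prod_eq_prod_neg]
      exact (h.prod h').of_equivalent ⟨.prodProdProdComm _ _ _ _⟩
    exact this

instance : Zero (WittGroup K) where
  zero := Quotient.mk _ ⟨PUnit, 0, polarBilin_nondegenerate_iff.mpr fun _ _ => rfl⟩

instance : Neg (WittGroup K) where
  neg := Quotient.map QuadraticSpace.neg fun Q R h => by
    have : IsMetabolic ((-Q.form).prod (-(-R.form))) := by
      rw [← neg_prod_eq_prod_neg]
      exact IsMetabolic.neg h
    exact this

instance : AddCommGroup (WittGroup K) where
  add_assoc := by
    rintro ⟨Q⟩ ⟨Q'⟩ ⟨Q''⟩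
    exact Quotient.sound <| equiv_of_equivalent ⟨LinearEquiv.prodAssoc K _ _ _, fun x =>
      (add_assoc (Q.form x.1.1) (Q'.form x.1.2) (Q''.form x.2)).symm⟩
  zero_add := by
    rintro ⟨Q⟩
    exact Quotient.sound <| equiv_of_equivalent ⟨LinearEquiv.uniqueProd, fun x =>
      (zero_add (Q.form x.2)).symm⟩
  add_zero := by
    rintro ⟨Q⟩
    exact Quotient.sound <| equiv_of_equivalent ⟨LinearEquiv.prodUnique, fun x =>
      (add_zero (Q.form x.1)).symm⟩
  nsmul := nsmulRec
  zsmul := zsmulRec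
  neg_add_cancel := by
    rintro ⟨Q⟩
    refine Quotient.sound <| equiv_of_isMetabolic ?_
      ⟨⊥, fun _ _ => rfl, finrank_zero_of_subsingleton.trans_le zero_le⟩
    exact (IsMetabolic.prod_neg Q.form).of_equivalent ⟨.prodComm _ _⟩
  add_comm := by
    rintro ⟨Q⟩ ⟨Q'⟩
    exact Quotient.sound <| equiv_of_equivalent ⟨.prodComm _ _⟩

section of

variable {V V' : Type u} [AddCommGroup V] [Module K V]
  [FiniteDimensional K V] [AddCommGroup V'] [Module K V'] [FiniteDimensional K V']
  {Q : QuadraticForm K V} {Q' : QuadraticForm K V'}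

/-- The Witt class of a nondegenerate quadratic form. -/
def of (Q : QuadraticForm K V) (h : Q.polarBilin.Nondegenerate) : WittGroup K :=
  Quotient.mk _ ⟨V, Q, h⟩

lemma of_prod (h : Q.polarBilin.Nondegenerate) (h' : Q'.polarBilin.Nondegenerate) :
    of (Q.prod Q') (polarBilin_prod_nondegenerate h h') = of Q h + of Q' h' := rfl

lemma of_eq_of_equivalent (h : Q.polarBilin.Nondegenerate) (h' : Q'.polarBilin.Nondegenerate)
    (e : Q.Equivalent Q') : of Q h = of Q' h' :=
  Quotient.sound (equiv_of_equivalent e)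

lemma of_eq_of_iff (h : Q.polarBilin.Nondegenerate) (h' : Q'.polarBilin.Nondegenerate) :
    of Q h = of Q' h' ↔ IsMetabolic (Q.prod (-Q')) :=
  Quotient.eq

lemma of_eq_zero_iff (h : Q.polarBilin.Nondegenerate) : of Q h = 0 ↔ IsMetabolic Q := by
  refine Quotient.eq.trans ?_
  have e : (Q.prod (-(0 : QuadraticForm K PUnit.{u + 1}))).Equivalent Q :=
    ⟨LinearEquiv.prodUnique, fun x => by simp⟩
  exact ⟨fun hQ => hQ.of_equivalent e, fun hQ => hQ.of_equivalent e.symm⟩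

end of

end WittGroup

end WittGroup

/-! ### Witt symbols -/

section WittSymbol

open QuadraticMap

universe u

/-- A function behaving like `a ↦ ⟨a⟩`, the class of the unary form `a x²` in a Witt group: these
are the relations between unary forms that the structure theory of the Witt group of `ℚ` needs. -/
structure IsWittSymbol {R W : Type*} [Ring R] [AddCommGroup W] (g : R → W) : Prop where
  map_zero : g 0 = 0
  map_neg : ∀ a, g (-a) = -g a
  map_mul_sq : ∀ a c, c ≠ 0 → g (a * c ^ 2) = g a
  map_add_map : ∀ a b, a ≠ 0 → b ≠ 0 → a + b ≠ 0 → g a + g b = g (a + b) + g (a * b * (a + b))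

namespace IsWittSymbol

variable {R S W : Type*} [Ring R] [Ring S] [AddCommGroup W] {g : R → W}

lemma add_eq (hg : IsWittSymbol g) (a b : R) : g a + g b = g (a + b) + g (a * b * (a + b)) := by
  obtain rfl | ha := eq_or_ne a 0
  · simp [hg.map_zero]
  obtain rfl | hb := eq_or_ne b 0
  · simp [hg.map_zero]
  obtain hab | hab := eq_or_ne (a + b) 0
  · rw [eq_neg_of_add_eq_zero_right hab, hg.map_neg]
    simp [hg.map_zero]
  · exact hg.map_add_map a b ha hb hab

lemma comp (hg : IsWittSymbol g) (f : S →+* R) (hf : Function.Injective f) :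
    IsWittSymbol (g ∘ f) where
  map_zero := by simp [hg.map_zero]
  map_neg a := by simp [hg.map_neg]
  map_mul_sq a c hc := by simp [hg.map_mul_sq _ _ ((map_ne_zero_iff f hf).mpr hc)]
  map_add_map a b _ _ _ := by simpa using hg.add_eq (f a) (f b)

lemma exists_add_sum_eq (hg : IsWittSymbol g) {ι : Type*} (s : Finset ι) (c : R) (e x : ι → R) :
    ∃ e' : ι → R, g c + ∑ i ∈ s, g (e i) = g (c + ∑ i ∈ s, e i * x i ^ 2) + ∑ i ∈ s, g (e' i) := by
  classical
  induction s using Finset.induction_on generalizing c with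
  | empty => exact ⟨e, by simp⟩
  | insert j s hj ih =>
    obtain ⟨b, hb⟩ : ∃ b, g c + g (e j) = g (c + e j * x j ^ 2) + g b := by
      by_cases hx : x j = 0
      · exact ⟨e j, by simp [hx]⟩
      · exact ⟨_, hg.map_mul_sq (e j) (x j) hx ▸ hg.add_eq c (e j * x j ^ 2)⟩
    obtain ⟨e', he'⟩ := ih (c + e j * x j ^ 2)
    refine ⟨Function.update e' j b, ?_⟩
    rw [Finset.sum_insert hj, Finset.sum_insert hj, Finset.sum_insert hj, Function.update_self,
      Finset.sum_congr rfl fun i hi =>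
        congrArg g (Function.update_of_ne (ne_of_mem_of_not_mem hi hj) b e'),
      ← add_assoc, hb, ← add_assoc c, add_left_comm, add_right_comm, he']
    abel

lemma exists_anisotropic {F : Type*} [Field F] {g : F → W} (hg : IsWittSymbol g) {n : ℕ}
    (e : Fin n → F) : ∃ (m : ℕ) (e' : Fin m → F),
      (weightedSumSquares F e').Anisotropic ∧ ∑ i, g (e i) = ∑ i, g (e' i) := by
  induction n with
  | zero => exact ⟨0, e, fun x _ => Subsingleton.elim _ _, rfl⟩
  | succ n ih =>
    by_cases h : (weightedSumSquares F e).Anisotropic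
    · exact ⟨n + 1, e, h, rfl⟩
    obtain ⟨x, hx, hx0⟩ : ∃ x, weightedSumSquares F e x = 0 ∧ x ≠ 0 := by
      simpa [QuadraticMap.Anisotropic] using h
    obtain ⟨i, hi⟩ := Function.ne_iff.mp hx0
    have hzero : e i + ∑ j, e (i.succAbove j) * (x (i.succAbove j) / x i) ^ 2 = 0 := by
      rw [weightedSumSquares_apply, Fin.sum_univ_succAbove _ i] at hx
      have : x i ≠ 0 := hi
      refine (mul_eq_zero_iff_right (pow_ne_zero 2 this)).mp ?_
      rw [← hx, add_mul, Finset.sum_mul]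
      congr 1
      · rw [smul_eq_mul, pow_two]
      · refine Finset.sum_congr rfl fun j _ => ?_
        simp only [smul_eq_mul]
        field_simp
    obtain ⟨e', he'⟩ := hg.exists_add_sum_eq Finset.univ (e i) (fun j => e (i.succAbove j))
      (fun j => x (i.succAbove j) / x i)
    obtain ⟨m, e'', han, hsum⟩ := ih e'
    exact ⟨m, e'', han, by
      rw [Fin.sum_univ_succAbove _ i, he', hzero, hg.map_zero, zero_add, hsum]⟩

lemma exists_sum_eq_of_mem_closure (hg : IsWittSymbol g) {s : Set R} (hs : ∀ a ∈ s, -a ∈ s) {x : W}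
    (hx : x ∈ AddSubgroup.closure (g '' s)) :
    ∃ (n : ℕ) (e : Fin n → R), (∀ i, e i ∈ s) ∧ x = ∑ i, g (e i) := by
  induction hx using AddSubgroup.closure_induction with
  | mem x hx =>
    obtain ⟨a, ha, rfl⟩ := hx
    exact ⟨1, fun _ => a, fun _ => ha, by simp⟩
  | zero => exact ⟨0, Fin.elim0, fun i => i.elim0, by simp⟩
  | add x y _ _ hx hy =>
    obtain ⟨n, e, he, rfl⟩ := hx
    obtain ⟨m, f, hf, rfl⟩ := hy
    exact ⟨n + m, Fin.append e f, Fin.addCases (by simpa using he) (by simpa using hf),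
      by simp [Fin.sum_univ_add]⟩
  | neg x _ hx =>
    obtain ⟨n, e, he, rfl⟩ := hx
    exact ⟨n, -e, fun i => hs _ (he i), by simp [hg.map_neg]⟩

end IsWittSymbol

namespace WittGroup

variable {K : Type u} [Field K]

/-- The unary quadratic form `a x²`. -/
def unaryForm (a : K) : QuadraticForm K K := a • QuadraticMap.sq

@[simp]
lemma unaryForm_apply (a x : K) : unaryForm a x = a * (x * x) := rfl

lemma unaryForm_prod_equivalent {a b : K} (hab : a + b ≠ 0) :
    ((unaryForm a).prod (unaryForm b)).Equivalent
      ((unaryForm (a + b)).prod (unaryForm (a * b * (a + b)))) :=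
  ⟨{ toFun := fun x => ((a * x.1 + b * x.2) / (a + b), (x.2 - x.1) / (a + b))
     invFun := fun z => (z.1 - b * z.2, z.1 + a * z.2)
     map_add' := fun x y => by ext <;> simp <;> ring
     map_smul' := fun c x => by ext <;> simp <;> ring
     left_inv := fun x => by ext <;> (simp; field_simp; ring)
     right_inv := fun z =>
       Prod.ext (by simp; field_simp; ring) (by simp [← add_mul, hab]) }, fun x => by
    simp; field_simp; ring⟩

section Symbol

variable [NeZero (2 : K)]

lemma polarBilin_weightedSumSquares_nondegenerate {ι : Type*} [Fintype ι] {w : ι → K}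
    (hw : ∀ i, w i ≠ 0) : (weightedSumSquares K w).polarBilin.Nondegenerate := by
  have := invertibleOfNonzero (two_ne_zero : (2 : K) ≠ 0)
  rw [nondegenerate_polar_iff, nondegenerate_iff_radical_eq_bot,
    QuadraticForm.radical_weightedSumSquares, Submodule.eq_bot_iff]
  exact fun x hx => funext fun i => Pi.mem_spanSubset_iff.mp hx i (hw i)

lemma polarBilin_unaryForm_nondegenerate {a : K} (ha : a ≠ 0) :
    (unaryForm a).polarBilin.Nondegenerate := by
  refine polarBilin_nondegenerate_iff.mpr fun x hx => ?_
  have h : 2 * (a * x) = 0 := by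
    rw [← hx 1, polar, unaryForm_apply, unaryForm_apply, unaryForm_apply]
    ring
  simpa [ha, two_ne_zero] using h

open Classical in
/-- The Witt class `⟨a⟩` of the unary form `a x²`, with the convention `⟨0⟩ = 0`. -/
noncomputable def symbol (a : K) : WittGroup K :=
  if ha : a = 0 then 0 else of (unaryForm a) (polarBilin_unaryForm_nondegenerate ha)

lemma symbol_zero : symbol (0 : K) = 0 := dif_pos rfl

lemma symbol_of_ne_zero {a : K} (ha : a ≠ 0) :
    symbol a = of (unaryForm a) (polarBilin_unaryForm_nondegenerate ha) := dif_neg ha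

lemma symbol_neg (a : K) : symbol (-a) = -symbol a := by
  obtain rfl | ha := eq_or_ne a 0
  · simp [symbol_zero]
  · rw [symbol_of_ne_zero ha, symbol_of_ne_zero (neg_ne_zero.mpr ha)]
    exact of_eq_of_equivalent _ _ ⟨.refl K K, fun x => by simp⟩

lemma symbol_mul_sq (a c : K) (hc : c ≠ 0) : symbol (a * c ^ 2) = symbol a := by
  obtain rfl | ha := eq_or_ne a 0
  · simp
  · rw [symbol_of_ne_zero ha, symbol_of_ne_zero (by positivity)]
    exact of_eq_of_equivalent _ _ ⟨LinearEquiv.smulOfNeZero K K c hc, fun x => by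
      simp; ring⟩

lemma isWittSymbol_symbol : IsWittSymbol (symbol : K → WittGroup K) where
  map_zero := symbol_zero
  map_neg := symbol_neg
  map_mul_sq := symbol_mul_sq
  map_add_map a b ha hb hab := by
    have h := mul_ne_zero (mul_ne_zero ha hb) hab
    rw [symbol_of_ne_zero ha, symbol_of_ne_zero hb, symbol_of_ne_zero hab, symbol_of_ne_zero h,
      ← of_prod, ← of_prod]
    exact of_eq_of_equivalent _ _ (unaryForm_prod_equivalent hab)

lemma of_weightedSumSquares {ι : Type} [Fintype ι] {w : ι → K} (hw : ∀ i, w i ≠ 0) :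
    of (weightedSumSquares K w) (polarBilin_weightedSumSquares_nondegenerate hw) =
      ∑ i, symbol (w i) := by
  revert w
  refine Fintype.induction_empty_option (P := fun ι _ => ∀ {w : ι → K} (hw : ∀ i, w i ≠ 0),
    of (weightedSumSquares K w) (polarBilin_weightedSumSquares_nondegenerate hw) =
      ∑ i, symbol (w i)) ?_ ?_ ?_ ι
  · intro α β _ e ih w hw
    let := Fintype.ofEquiv β e.symm
    rw [← e.sum_comp, ← ih fun i => hw (e i)]
    refine of_eq_of_equivalent _ _ ⟨LinearEquiv.funCongrLeft K K e, fun x => ?_⟩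
    simp [weightedSumSquares_apply, ← e.sum_comp]
  · intro w hw
    rw [Finset.univ_eq_empty, Finset.sum_empty, of_eq_zero_iff]
    exact ⟨⊥, by simp, by simp⟩
  · intro α _ ih w hw
    rw [Fintype.sum_option, ← ih fun i => hw i, symbol_of_ne_zero (hw none), ← of_prod]
    refine of_eq_of_equivalent _ _ ⟨LinearEquiv.piOptionEquivProd K, fun x => ?_⟩
    simp [weightedSumSquares_apply, Fintype.sum_option, LinearEquiv.piOptionEquivProd]

end Symbol

end WittGroup

end WittSymbol

/-! ### Tate's filtration by primes -/

section Filtration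

open QuadraticMap

/-- The integers all of whose prime factors are less than `k`. -/
def smoothIntegers (k : ℕ) : Submonoid ℤ where
  carrier := {a | a.natAbs ∈ Nat.smoothNumbers k}
  one_mem' := ⟨by simp, by simp⟩
  mul_mem' ha hb := by simpa [Int.natAbs_mul] using Nat.mul_mem_smoothNumbers ha hb

namespace smoothIntegers

variable {k : ℕ} {a b : ℤ}

lemma mem_iff : a ∈ smoothIntegers k ↔ a.natAbs ∈ Nat.smoothNumbers k := Iff.rfl

lemma ne_zero (ha : a ∈ smoothIntegers k) : a ≠ 0 :=
  Int.natAbs_ne_zero.mp (Nat.ne_zero_of_mem_smoothNumbers ha)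

lemma neg_mem (ha : a ∈ smoothIntegers k) : -a ∈ smoothIntegers k := by
  simpa [mem_iff] using ha

lemma mem_of_dvd (ha : a ∈ smoothIntegers k) (h : b ∣ a) : b ∈ smoothIntegers k :=
  Nat.mem_smoothNumbers_of_dvd ha (Int.natAbs_dvd_natAbs.mpr h)

lemma mem_of_natAbs_lt (ha : a ≠ 0) (h : a.natAbs < k) : a ∈ smoothIntegers k :=
  Nat.mem_smoothNumbers_of_lt (Int.natAbs_pos.mpr ha) h

variable {p : ℕ} [Fact p.Prime]

lemma intCast_ne_zero (ha : a ∈ smoothIntegers p) : (a : ZMod p) ≠ 0 := by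
  have hp : p.Prime := Fact.out
  rw [Ne, ZMod.intCast_zmod_eq_zero_iff_dvd, Int.natCast_dvd, ← hp.coprime_iff_not_dvd]
  exact hp.smoothNumbers_coprime ha

lemma mem_of_mem_succ (ha : a ∈ smoothIntegers (p + 1)) (hpa : (a : ZMod p) ≠ 0) :
    a ∈ smoothIntegers p := by
  rw [Ne, ZMod.intCast_zmod_eq_zero_iff_dvd, Int.natCast_dvd] at hpa
  refine Nat.mem_smoothNumbers'.mpr fun q hq hqa => ?_
  exact (Nat.lt_succ_iff.mp (Nat.mem_smoothNumbers'.mp ha q hq hqa)).lt_of_ne fun h => hpa (h ▸ hqa)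

lemma mem_of_natAbs_le (ha : (a : ZMod p) ≠ 0) (h : a.natAbs ≤ p) : a ∈ smoothIntegers p :=
  mem_of_mem_succ (mem_of_natAbs_lt (by rintro rfl; simp at ha) (Nat.lt_succ_iff.mpr h)) ha

lemma valMinAbs_mem {x : ZMod p} (hx : x ≠ 0) : x.valMinAbs ∈ smoothIntegers p :=
  mem_of_natAbs_le (by simpa using hx) ((ZMod.natAbs_valMinAbs_le x).trans (Nat.div_le_self p 2))

end smoothIntegers

variable {W : Type*} [AddCommGroup W] {g : ℤ → W}

/-- The `k`-th step of Tate's filtration: the subgroup generated by the values of `g` at the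
integers whose prime factors are less than `k`. -/
def smoothSubgroup (g : ℤ → W) (k : ℕ) : AddSubgroup W :=
  AddSubgroup.closure (g '' smoothIntegers k)

lemma apply_mem_smoothSubgroup {k : ℕ} {a : ℤ} (ha : a ∈ smoothIntegers k) :
    g a ∈ smoothSubgroup g k :=
  AddSubgroup.subset_closure (Set.mem_image_of_mem g ha)

lemma smoothSubgroup_mono {k l : ℕ} (h : k ≤ l) : smoothSubgroup g k ≤ smoothSubgroup g l :=
  AddSubgroup.closure_mono (Set.image_mono fun _ ha => Nat.smoothNumbers_mono h ha)

lemma smoothSubgroup_succ {k : ℕ} (h : ¬ k.Prime) :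
    smoothSubgroup g (k + 1) = smoothSubgroup g k := by
  simp only [smoothSubgroup, Set.image, SetLike.mem_coe, smoothIntegers.mem_iff,
    Nat.smoothNumbers_succ h]

/-- The symbol `⟨x⟩ ↦ ⟨p x⟩` which identifies the quotient of two consecutive steps of Tate's
filtration with a quotient of the Witt group of `ZMod p`; a residue is lifted to `ℤ` by its
representative of least absolute value. -/
def residueSymbol (g : ℤ → W) (p : ℕ) (x : ZMod p) : W ⧸ smoothSubgroup g p :=
  (g (p * x.valMinAbs) : W)

namespace IsWittSymbol

variable {p : ℕ} [Fact p.Prime]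

lemma mk_eq_mk_of_natAbs_sub_lt (hg : IsWittSymbol g) {a b t : ℤ} (ha : a ∈ smoothIntegers p)
    (hb : b ∈ smoothIntegers p) (ht : t ∈ smoothIntegers p) (h : (a : ZMod p) = b)
    (hab : (a - b).natAbs < p * p) :
    (g (p * (t * a)) : W ⧸ smoothSubgroup g p) = (g (p * (t * b)) : W) := by
  have hp : (p : ℤ) ≠ 0 := Nat.cast_ne_zero.mpr (Fact.out : p.Prime).ne_zero
  obtain ⟨l, hl⟩ := (ZMod.intCast_eq_intCast_iff_dvd_sub b a p).mp h.symm
  obtain rfl | hl0 := eq_or_ne l 0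
  · rw [sub_eq_zero.mp (hl.trans (mul_zero _))]
  have hls : l ∈ smoothIntegers p := by
    refine smoothIntegers.mem_of_natAbs_lt hl0 (Nat.lt_of_mul_lt_mul_left (a := p) ?_)
    rwa [hl, Int.natAbs_mul, Int.natAbs_natCast] at hab
  have key : g (p * (t * b)) + g (t * l) = g (p * (t * a)) + g (t * l * a * b) := by
    have := hg.add_eq (p * (t * b)) (t * l * (p : ℤ) ^ 2)
    rwa [hg.map_mul_sq _ _ hp,
      show p * (t * b) + t * l * (p : ℤ) ^ 2 = p * (t * a) by linear_combination -(p * t : ℤ) * hl,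
      show p * (t * b) * (t * l * (p : ℤ) ^ 2) * (p * (t * a)) =
        t * l * a * b * ((p : ℤ) ^ 2 * t) ^ 2 by ring,
      hg.map_mul_sq _ _ (mul_ne_zero (pow_ne_zero 2 hp) (smoothIntegers.ne_zero ht))] at this
  rw [QuotientAddGroup.eq_iff_sub_mem, show g (p * (t * a)) - g (p * (t * b)) =
    g (t * l) - g (t * l * a * b) by rw [sub_eq_sub_iff_add_eq_add, ← key, add_comm]]
  exact sub_mem (apply_mem_smoothSubgroup (mul_mem ht hls))
    (apply_mem_smoothSubgroup (mul_mem (mul_mem (mul_mem ht hls) ha) hb))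

lemma mk_eq_mk_valMinAbs (hg : IsWittSymbol g) {b t : ℤ} (hb : b ∈ smoothIntegers p)
    (ht : t ∈ smoothIntegers p) :
    (g (p * (t * b)) : W ⧸ smoothSubgroup g p) = (g (p * (t * (b : ZMod p).valMinAbs)) : W) := by
  have hp : 2 ≤ p := (Fact.out : p.Prime).two_le
  have hr (x : ZMod p) := x.natAbs_valMinAbs_le
  have hrs {b : ℤ} (hb : b ∈ smoothIntegers p) :=
    smoothIntegers.valMinAbs_mem (smoothIntegers.intCast_ne_zero hb)
  induction b using UniqueFactorizationMonoid.induction_on_prime generalizing t with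
  | h₁ => exact absurd rfl (smoothIntegers.ne_zero hb)
  | h₂ b hu =>
    refine hg.mk_eq_mk_of_natAbs_sub_lt hb (hrs hb) ht (by simp) ?_
    have := hr b
    have := Int.isUnit_iff_natAbs_eq.mp hu
    have := Nat.mul_le_mul_right p hp
    omega
  | h₃ b q _ hq ih =>
    have hqs := smoothIntegers.mem_of_dvd hb (dvd_mul_right q b)
    have hbs := smoothIntegers.mem_of_dvd hb (dvd_mul_left b q)
    rw [← mul_assoc t, ih hbs (mul_mem ht hqs), mul_assoc t]
    refine hg.mk_eq_mk_of_natAbs_sub_lt (mul_mem hqs (hrs hbs)) (hrs hb) ht (by simp) ?_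
    have hqp : q.natAbs ≤ p - 1 :=
      Nat.le_sub_one_of_lt <|
        Nat.mem_smoothNumbers'.mp hqs _ (Int.prime_iff_natAbs_prime.mp hq) dvd_rfl
    calc (q * (b : ZMod p).valMinAbs - ((q * b : ℤ) : ZMod p).valMinAbs).natAbs
        ≤ q.natAbs * (b : ZMod p).valMinAbs.natAbs + ((q * b : ℤ) : ZMod p).valMinAbs.natAbs :=
          (Int.natAbs_sub_le _ _).trans_eq (by rw [Int.natAbs_mul])
      _ ≤ (p - 1) * (p / 2) + p / 2 := by gcongr <;> exact hr _
      _ = p * (p / 2) := by rw [← Nat.succ_mul, Nat.succ_eq_add_one, Nat.sub_add_cancel (by omega)]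
      _ < p * p := by gcongr; omega

lemma residueSymbol_intCast (hg : IsWittSymbol g) {b : ℤ} (hb : b ∈ smoothIntegers p) :
    residueSymbol g p b = (g (p * b) : W) := by
  simpa [residueSymbol] using (hg.mk_eq_mk_valMinAbs hb (one_mem _)).symm

lemma residue (hg : IsWittSymbol g) : IsWittSymbol (residueSymbol g p) where
  map_zero := by simp [residueSymbol, hg.map_zero]
  map_neg x := by
    obtain rfl | hx := eq_or_ne x 0
    · simp [residueSymbol, hg.map_zero]
    · have := hg.residueSymbol_intCast (smoothIntegers.neg_mem (smoothIntegers.valMinAbs_mem hx))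
      simpa [residueSymbol, hg.map_neg] using this
  map_mul_sq x y hy := by
    obtain rfl | hx := eq_or_ne x 0
    · simp
    have hy' := smoothIntegers.valMinAbs_mem hy
    have := hg.residueSymbol_intCast
      (mul_mem (smoothIntegers.valMinAbs_mem hx) (pow_mem hy' 2))
    rw [← mul_assoc, hg.map_mul_sq _ _ (smoothIntegers.ne_zero hy')] at this
    simpa [residueSymbol] using this
  map_add_map x y hx hy hxy := by
    have hx' := smoothIntegers.valMinAbs_mem hx
    have hy' := smoothIntegers.valMinAbs_mem hy
    set r := x.valMinAbs with hr
    set s := y.valMinAbs with hs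
    have hp : (p : ℤ) ≠ 0 := Nat.cast_ne_zero.mpr (Fact.out : p.Prime).ne_zero
    have hrs : r + s ∈ smoothIntegers p := by
      refine smoothIntegers.mem_of_natAbs_le (by simpa [hr, hs] using hxy) ?_
      have := x.natAbs_valMinAbs_le
      have := y.natAbs_valMinAbs_le
      omega
    have h₁ := hg.residueSymbol_intCast hrs
    have h₂ := hg.residueSymbol_intCast (mul_mem (mul_mem hx' hy') hrs)
    simp only [hr, hs, Int.cast_add, Int.cast_mul, ZMod.coe_valMinAbs] at h₁ h₂
    rw [h₁, h₂, residueSymbol, residueSymbol, ← QuotientAddGroup.mk_add,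
      ← QuotientAddGroup.mk_add, hg.add_eq, ← mul_add,
      show p * r * (p * s) * (p * (r + s)) = p * (r * s * (r + s)) * (p : ℤ) ^ 2 by ring,
      hg.map_mul_sq _ _ hp]

lemma mk_mem_closure_range_residueSymbol (hg : IsWittSymbol g) {c : W}
    (hc : c ∈ smoothSubgroup g (p + 1)) :
    (c : W ⧸ smoothSubgroup g p) ∈ AddSubgroup.closure (residueSymbol g p '' Set.univ) := by
  induction hc using AddSubgroup.closure_induction with
  | zero => exact zero_mem _
  | add x y _ _ hx hy => exact add_mem hx hy
  | neg x _ hx => exact neg_mem hx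
  | mem _ h =>
    obtain ⟨a, ha, rfl⟩ := h
    have hp := Nat.prime_iff_prime_int.mp (Fact.out : p.Prime)
    obtain ⟨b, hab, hpb⟩ := (FiniteMultiplicity.of_prime_left hp
      (smoothIntegers.ne_zero ha)).exists_eq_pow_mul_and_not_dvd
    have hb : b ∈ smoothIntegers p :=
      smoothIntegers.mem_of_mem_succ (smoothIntegers.mem_of_dvd ha ⟨_, hab.trans (mul_comm _ _)⟩)
        ((ZMod.intCast_zmod_eq_zero_iff_dvd b p).not.mpr hpb)
    obtain ⟨k, hk | hk⟩ := Nat.even_or_odd' (multiplicity (p : ℤ) a) <;> rw [hk] at hab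
    · rw [show a = b * ((p : ℤ) ^ k) ^ 2 by rw [hab]; ring,
        hg.map_mul_sq _ _ (pow_ne_zero k hp.ne_zero),
        (QuotientAddGroup.eq_zero_iff _).mpr (apply_mem_smoothSubgroup hb)]
      exact zero_mem _
    · rw [show a = p * b * ((p : ℤ) ^ k) ^ 2 by rw [hab]; ring,
        hg.map_mul_sq _ _ (pow_ne_zero k hp.ne_zero), ← hg.residueSymbol_intCast hb]
      exact AddSubgroup.subset_closure (Set.mem_image_of_mem _ (Set.mem_univ _))

lemma exists_anisotropic_residue (hg : IsWittSymbol g) {c : W} (hc : c ∈ smoothSubgroup g (p + 1)) :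
    ∃ (m : ℕ) (e : Fin m → ZMod p), (weightedSumSquares (ZMod p) e).Anisotropic ∧
      c - ∑ i, g (p * (e i).valMinAbs) ∈ smoothSubgroup g p := by
  obtain ⟨n, e, -, he⟩ := hg.residue.exists_sum_eq_of_mem_closure (fun _ _ => Set.mem_univ _)
    (hg.mk_mem_closure_range_residueSymbol hc)
  obtain ⟨m, e', han, hsum⟩ := hg.residue.exists_anisotropic e
  refine ⟨m, e', han, ?_⟩
  rw [← QuotientAddGroup.eq_iff_sub_mem, he, hsum]
  exact (map_sum (QuotientAddGroup.mk' (smoothSubgroup g p)) _ _).symm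

end IsWittSymbol

end Filtration

/-! ### Residues of unimodular forms -/

section UnimodularResidue

open QuadraticMap Matrix Module nonZeroDivisors

lemma finrank_comap_restrictScalars {R K M V : Type*} [CommRing R] [IsDomain R] [Field K]
    [Algebra R K] [IsFractionRing R K] [AddCommGroup M] [Module R M] [AddCommGroup V] [Module R V]
    [Module K V] [IsScalarTower R K V] (f : M →ₗ[R] V) [IsLocalizedModule R⁰ f]
    (X : Submodule K V) : finrank R ((X.restrictScalars R).comap f) = finrank K X := by
  let N := (X.restrictScalars R).comap f
  have hX : N.localized' K R⁰ f = X := (Submodule.localized'gi K R⁰ f).l_u_eq X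
  calc finrank R N = finrank R (N.localized' K R⁰ f) :=
        (IsLocalizedModule.finrank_eq R⁰ (N.toLocalized' K R⁰ f) le_rfl).symm
    _ = finrank K X := by rw [← IsFractionRing.finrank_right_eq R (S := K), hX]

lemma isLocalizedModule_compLeft {R M M' : Type*} [CommRing R] [AddCommGroup M] [AddCommGroup M']
    [Module R M] [Module R M'] (S : Submonoid R) (f : M →ₗ[R] M') [IsLocalizedModule S f]
    (ι : Type*) [Finite ι] : IsLocalizedModule S (f.compLeft ι) :=
  IsLocalizedModule.pi S fun _ : ι => f

lemma linearIndependent_zmod_comp_basis {p : ℕ} {N V ι : Type*} [AddCommGroup N]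
    [AddCommGroup V] [Module (ZMod p) V] [Finite ι] (b : Basis ι ℤ N) (φ : N →+ V)
    (hφ : ∀ n, φ n = 0 → ∃ m, n = (p : ℤ) • m) : LinearIndependent (ZMod p) (φ ∘ b) := by
  have := Fintype.ofFinite ι
  refine Fintype.linearIndependent_iff.mpr fun c hc i => ?_
  have hc' : φ (∑ i, ((c i).cast : ℤ) • b i) = 0 := by
    rw [map_sum, ← hc]
    refine Finset.sum_congr rfl fun i _ => ?_
    rw [map_zsmul, ← Int.cast_smul_eq_zsmul (ZMod p), ZMod.intCast_cast, ZMod.cast_id]; rfl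
  obtain ⟨m, hm⟩ := hφ _ hc'
  have hi : (c i).cast = (p : ℤ) * b.repr m i := by
    rw [← congrFun (b.repr_sum_self fun i => (c i).cast) i, hm, map_smul, Finsupp.smul_apply,
      smul_eq_mul]
  simpa using congrArg (Int.cast : ℤ → ZMod p) hi

lemma two_mul_card_le_of_dotProduct_mulVec_eq_zero {F κ ι : Type*} [Field F] [Fintype κ]
    [DecidableEq κ] [Fintype ι] {A : Matrix κ κ F} (hA : IsUnit A.det) {v : ι → κ → F}
    (hv : LinearIndependent F v) (h : ∀ i j, v i ⬝ᵥ A *ᵥ v j = 0) :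
    2 * Fintype.card ι ≤ Fintype.card κ := by
  have hr : (of v).rank = Fintype.card ι := hv.rank_matrix
  have hz : of v * (A * (of v)ᵀ) = 0 := by
    ext i j
    exact h i j
  have := rank_add_rank_le_card_of_mul_eq_zero hz
  rw [rank_mul_eq_right_of_isUnit_det _ _ hA, rank_transpose, hr] at this
  omega

section Lattice

variable {κ ι : Type*} [Fintype κ] [Fintype ι] {A : Matrix κ κ ℤ} {c : ι → ℤ}
  {N : Submodule ℤ ((κ → ℤ) × (ι → ℤ))}

lemma dvd_dotProduct_mulVec_of_isotropic {p : ℤ} (hA : A.IsSymm)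
    (hN : ∀ n ∈ N, n.1 ⬝ᵥ A *ᵥ n.1 = p * ∑ i, c i * n.2 i ^ 2) {m n} (hm : m ∈ N) (hn : n ∈ N) :
    p ∣ m.1 ⬝ᵥ A *ᵥ n.1 := by
  have h := hN _ (add_mem hm hn)
  have hsymm : n.1 ⬝ᵥ A *ᵥ m.1 = m.1 ⬝ᵥ A *ᵥ n.1 := by
    rw [dotProduct_mulVec, ← mulVec_transpose, hA.eq, dotProduct_comm]
  have hsq : ∑ i, c i * (m.2 i + n.2 i) ^ 2 =
      ∑ i, c i * m.2 i ^ 2 + ∑ i, c i * n.2 i ^ 2 + 2 * ∑ i, c i * (m.2 i * n.2 i) := by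
    rw [Finset.mul_sum, ← Finset.sum_add_distrib, ← Finset.sum_add_distrib]
    exact Finset.sum_congr rfl fun i _ => by ring
  simp only [Prod.fst_add, Prod.snd_add, mulVec_add, add_dotProduct, dotProduct_add,
    Pi.add_apply, hN _ hm, hN _ hn, hsymm, hsq] at h
  exact ⟨∑ i, c i * (m.2 i * n.2 i), by linarith⟩

variable {p : ℕ} [Fact p.Prime]

-- If `p` divides the first component of `n`, then `p²` divides `n.1 ⬝ᵥ A *ᵥ n.1`, so the second
-- component of `n` is isotropic modulo `p`.
lemma exists_eq_smul_of_isotropic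
    (hc : (weightedSumSquares (ZMod p) fun i => (c i : ZMod p)).Anisotropic)
    (hN : ∀ n ∈ N, n.1 ⬝ᵥ A *ᵥ n.1 = p * ∑ i, c i * n.2 i ^ 2)
    (hpN : ∀ n, (p : ℤ) • n ∈ N → n ∈ N) {n} (hn : n ∈ N) (h : ∀ j, (n.1 j : ZMod p) = 0) :
    ∃ m ∈ N, n = (p : ℤ) • m := by
  have hp : (p : ℤ) ≠ 0 := Nat.cast_ne_zero.mpr (Fact.out : p.Prime).ne_zero
  choose k hk using fun j => (ZMod.intCast_zmod_eq_zero_iff_dvd _ p).mp (h j)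
  have hk : n.1 = (p : ℤ) • k := funext hk
  have hsum : p * (k ⬝ᵥ A *ᵥ k) = ∑ i, c i * n.2 i ^ 2 := by
    refine mul_left_cancel₀ hp ?_
    rw [← hN n hn, hk, mulVec_smul, smul_dotProduct, dotProduct_smul, smul_eq_mul, smul_eq_mul]
  have hiso : (fun i => (n.2 i : ZMod p)) = 0 := by
    refine hc _ ?_
    simpa [weightedSumSquares_apply, pow_two] using (congrArg (Int.cast : ℤ → ZMod p) hsum).symm
  choose l hl using fun i => (ZMod.intCast_zmod_eq_zero_iff_dvd _ p).mp (congrFun hiso i)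
  have hkl : n = (p : ℤ) • (k, l) := Prod.ext hk (funext hl)
  exact ⟨(k, l), hpN _ (hkl ▸ hn), hkl⟩

lemma two_mul_finrank_le_card_of_isotropic [DecidableEq κ] (hA : A.IsSymm)
    (hdet : (A.det : ZMod p) ≠ 0)
    (hc : (weightedSumSquares (ZMod p) fun i => (c i : ZMod p)).Anisotropic)
    (hN : ∀ n ∈ N, n.1 ⬝ᵥ A *ᵥ n.1 = p * ∑ i, c i * n.2 i ^ 2)
    (hpN : ∀ n, (p : ℤ) • n ∈ N → n ∈ N) : 2 * finrank ℤ N ≤ Fintype.card κ := by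
  let φ : N →+ (κ → ZMod p) :=
    ((Int.castAddHom (ZMod p)).compLeft κ).comp
      (LinearMap.fst ℤ (κ → ℤ) (ι → ℤ) ∘ₗ N.subtype).toAddMonoidHom
  have hφ (n : N) (h : φ n = 0) : ∃ m, n = (p : ℤ) • m := by
    obtain ⟨m, hm, hnm⟩ := exists_eq_smul_of_isotropic hc hN hpN n.2 (congrFun h)
    exact ⟨⟨m, hm⟩, Subtype.ext hnm⟩
  let b := finBasis ℤ N
  have hdet' : IsUnit (A.map (Int.cast : ℤ → ZMod p)).det := by
    rwa [← Int.cast_det, isUnit_iff_ne_zero]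
  have := two_mul_card_le_of_dotProduct_mulVec_eq_zero hdet'
    (linearIndependent_zmod_comp_basis b φ hφ) fun i j => ?_
  · simpa using this
  · have := dvd_dotProduct_mulVec_of_isotropic hA hN (b i).2 (b j).2
    rw [← ZMod.intCast_zmod_eq_zero_iff_dvd] at this
    simpa [φ, dotProduct, mulVec] using this

end Lattice

variable {κ ι : Type*} [Fintype κ] [DecidableEq κ] [Fintype ι]

/-- The rational quadratic form `xᵀAx` of an integer matrix. -/
def rationalForm (A : Matrix κ κ ℤ) : QuadraticForm ℚ (κ → ℚ) :=
  (A.map (Int.cast : ℤ → ℚ)).toQuadraticForm'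

lemma rationalForm_apply (A : Matrix κ κ ℤ) (x : κ → ℚ) :
    rationalForm A x = x ⬝ᵥ A.map (Int.cast : ℤ → ℚ) *ᵥ x := by
  rw [rationalForm, toQuadraticForm', LinearMap.BilinMap.toQuadraticMap_apply,
    toLinearMap₂'_apply']

lemma rationalForm_intCast (A : Matrix κ κ ℤ) (x : κ → ℤ) :
    rationalForm A (fun i => (x i : ℚ)) = (x ⬝ᵥ A *ᵥ x : ℤ) := by
  simp [rationalForm_apply, dotProduct, mulVec]

lemma rationalForm_diagonal (d : κ → ℤ) :
    rationalForm (diagonal d) = weightedSumSquares ℚ fun i => (d i : ℚ) := by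
  ext x
  simp [rationalForm_apply, weightedSumSquares_apply, diagonal_map, mulVec_diagonal, dotProduct,
    mul_left_comm]

lemma rationalForm_fromBlocks_equivalent {ι : Type*} [Fintype ι] [DecidableEq ι] (A : Matrix κ κ ℤ)
    (B : Matrix ι ι ℤ) : (rationalForm (fromBlocks A 0 0 B)).Equivalent
      ((rationalForm A).prod (rationalForm B)) :=
  ⟨LinearEquiv.sumArrowLequivProdArrow κ ι ℚ ℚ, fun x => by
    obtain ⟨y, z, rfl⟩ : ∃ y z, x = Sum.elim y z := ⟨_, _, (Sum.elim_comp_inl_inr x).symm⟩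
    have : LinearEquiv.sumArrowLequivProdArrow κ ι ℚ ℚ (Sum.elim y z) = (y, z) := rfl
    simp [this, rationalForm_apply, fromBlocks_map, fromBlocks_mulVec, sumElim_dotProduct_sumElim]⟩

lemma polarBilin_rationalForm_nondegenerate {A : Matrix κ κ ℤ} (hA : A.IsSymm) (h : A.det ≠ 0) :
    (rationalForm A).polarBilin.Nondegenerate := by
  refine polarBilin_nondegenerate_iff.mpr fun x hx => ?_
  have hdet : (A.map (Int.cast : ℤ → ℚ)).det ≠ 0 := by
    rwa [← Int.cast_det, Int.cast_ne_zero]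
  have hA' : (A.map (Int.cast : ℤ → ℚ)).IsSymm := hA.map _
  refine eq_zero_of_mulVec_eq_zero hdet (dotProduct_eq_zero _ fun y => ?_)
  have := hx y
  rw [rationalForm, toQuadraticForm', LinearMap.BilinMap.polar_toQuadraticMap,
    toLinearMap₂'_apply', toLinearMap₂'_apply', dotProduct_mulVec, ← mulVec_transpose,
    hA'.eq, dotProduct_comm y] at this
  linarith

theorem isEmpty_of_isMetabolic {p : ℕ} [Fact p.Prime] {A : Matrix κ κ ℤ} (hA : A.IsSymm)
    (hdet : (A.det : ZMod p) ≠ 0) {c : ι → ℤ}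
    (hc : (weightedSumSquares (ZMod p) fun i => (c i : ZMod p)).Anisotropic)
    (h : IsMetabolic ((rationalForm A).prod
      (-(weightedSumSquares ℚ fun i => ((p * c i : ℤ) : ℚ))))) : IsEmpty ι := by
  obtain ⟨X, hX, hdim⟩ := h
  have hκ := isLocalizedModule_compLeft ℤ⁰ (Algebra.linearMap ℤ ℚ) κ
  have hι := isLocalizedModule_compLeft ℤ⁰ (Algebra.linearMap ℤ ℚ) ι
  let f := ((Algebra.linearMap ℤ ℚ).compLeft κ).prodMap ((Algebra.linearMap ℤ ℚ).compLeft ι)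
  have hN := finrank_comap_restrictScalars f X
  have hle := two_mul_finrank_le_card_of_isotropic (N := (X.restrictScalars ℤ).comap f) hA hdet hc
    (fun n hn => ?_) fun n hn => ?_
  · rw [← Fintype.card_eq_zero_iff]
    simp only [finrank_prod, finrank_fintype_fun_eq_card] at hdim
    omega
  · have hfn : f n = (fun i => (n.1 i : ℚ), fun i => (n.2 i : ℚ)) := rfl
    have hQ := hX _ hn
    rw [hfn, prod_apply, rationalForm_intCast, _root_.neg_apply, add_neg_eq_zero] at hQ
    have : ((n.1 ⬝ᵥ A *ᵥ n.1 : ℤ) : ℚ) = (p * ∑ i, c i * n.2 i ^ 2 : ℤ) := by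
      rw [hQ]
      simp [weightedSumSquares_apply, mul_assoc, Finset.mul_sum, pow_two]
    exact_mod_cast this
  · rwa [Submodule.mem_comap, map_smul, Submodule.restrictScalars_mem,
      ← Int.cast_smul_eq_zsmul ℚ, X.smul_mem_iff] at hn
    exact_mod_cast (Fact.out : p.Prime).ne_zero

end UnimodularResidue

/-! ### The Witt class of a unimodular form -/

section UnimodularClass

open QuadraticMap Matrix Module

lemma ne_zero_of_anisotropic_weightedSumSquares {R ι : Type*} [CommRing R] [Nontrivial R]
    [Fintype ι] {w : ι → R} (h : (weightedSumSquares R w).Anisotropic) (i : ι) : w i ≠ 0 := by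
  classical
  intro hi
  refine Pi.single_ne_zero_iff.mpr one_ne_zero (h (Pi.single i 1) ?_)
  simp [weightedSumSquares_apply, Pi.single_apply, hi]

namespace WittGroup

/-- The Witt class `⟨a⟩` over `ℚ` of an integer `a`. -/
noncomputable def intSymbol (a : ℤ) : WittGroup ℚ := symbol (a : ℚ)

lemma isWittSymbol_intSymbol : IsWittSymbol intSymbol :=
  isWittSymbol_symbol.comp (Int.castRingHom ℚ) Int.cast_injective

lemma symbol_eq_intSymbol (a : ℚ) : symbol a = intSymbol (a.num * a.den) := by
  have hden : (a.den : ℚ) ≠ 0 := Nat.cast_ne_zero.mpr a.den_ne_zero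
  rw [intSymbol, ← symbol_mul_sq a a.den hden, Int.cast_mul, Int.cast_natCast, pow_two, ← mul_assoc,
    Rat.mul_den_eq_num]

lemma exists_of_mem_smoothSubgroup {V : Type} [AddCommGroup V] [Module ℚ V]
    [FiniteDimensional ℚ V] {Q : QuadraticForm ℚ V} (h : Q.polarBilin.Nondegenerate) :
    ∃ k, of Q h ∈ smoothSubgroup intSymbol k := by
  have hQ : (associated (R := ℚ) Q).SeparatingLeft :=
    (nondegenerate_associated_iff.mpr (nondegenerate_polar_iff.mp h)).1
  obtain ⟨w, hw⟩ := QuadraticForm.equivalent_weightedSumSquares_units_of_nondegenerate' Q hQ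
  have hw : Q.Equivalent (weightedSumSquares ℚ fun i => (w i : ℚ)) := hw
  have hw0 (i) : (w i : ℚ) ≠ 0 := (w i).ne_zero
  rw [of_eq_of_equivalent h (polarBilin_weightedSumSquares_nondegenerate hw0) hw,
    of_weightedSumSquares hw0]
  refine Finset.sum_induction _ (fun x => ∃ k, x ∈ smoothSubgroup intSymbol k) ?_ ⟨0, zero_mem _⟩ ?_
  · rintro x y ⟨k, hk⟩ ⟨l, hl⟩
    exact ⟨max k l, add_mem (smoothSubgroup_mono (le_max_left k l) hk)
      (smoothSubgroup_mono (le_max_right k l) hl)⟩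
  · intro i _
    rw [symbol_eq_intSymbol]
    exact ⟨_, apply_mem_smoothSubgroup (smoothIntegers.mem_of_natAbs_lt
      (mul_ne_zero (Rat.num_ne_zero.mpr (hw0 i)) (mod_cast (w i : ℚ).den_ne_zero))
      (Nat.lt_succ_self _))⟩

lemma of_rationalForm_fromBlocks_diagonal {κ ι : Type} [Fintype κ] [DecidableEq κ] [Fintype ι]
    [DecidableEq ι] {A : Matrix κ κ ℤ} {d : ι → ℤ} (h : (rationalForm A).polarBilin.Nondegenerate)
    (hd : ∀ i, d i ≠ 0)
    (h' : (rationalForm (fromBlocks A 0 0 (diagonal d))).polarBilin.Nondegenerate) :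
    of (rationalForm (fromBlocks A 0 0 (diagonal d))) h' =
      of (rationalForm A) h + ∑ i, intSymbol (d i) := by
  have hd' : ∀ i, (d i : ℚ) ≠ 0 := fun i => Int.cast_ne_zero.mpr (hd i)
  unfold intSymbol
  rw [← of_weightedSumSquares hd', ← of_prod]
  refine of_eq_of_equivalent _ _ ?_
  rw [← rationalForm_diagonal]
  exact rationalForm_fromBlocks_equivalent A _

variable {κ : Type} [Fintype κ] [DecidableEq κ] {A : Matrix κ κ ℤ}

theorem of_rationalForm_mem_smoothSubgroup_of_succ {p : ℕ} [Fact p.Prime] (hA : A.IsSymm)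
    (hdet : IsUnit A.det) (h : (rationalForm A).polarBilin.Nondegenerate)
    (hmem : of (rationalForm A) h ∈ smoothSubgroup intSymbol (p + 1)) :
    of (rationalForm A) h ∈ smoothSubgroup intSymbol p := by
  obtain ⟨m, e, he, hsub⟩ := isWittSymbol_intSymbol.exists_anisotropic_residue hmem
  obtain ⟨n, d, hd, hsum⟩ := isWittSymbol_intSymbol.exists_sum_eq_of_mem_closure
    (fun _ => smoothIntegers.neg_mem) hsub
  have hA' : (fromBlocks A 0 0 (diagonal (-d))).IsSymm :=
    hA.fromBlocks (by simp) (isSymm_diagonal _)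
  have hdet' : ((fromBlocks A 0 0 (diagonal (-d))).det : ZMod p) ≠ 0 := by
    rw [det_fromBlocks_zero₂₁, det_diagonal, Int.cast_mul, Int.cast_prod]
    refine mul_ne_zero (hdet.map (Int.castRingHom (ZMod p))).ne_zero ?_
    exact Finset.prod_ne_zero_iff.mpr fun i _ =>
      smoothIntegers.intCast_ne_zero (smoothIntegers.neg_mem (hd i))
  have h' := polarBilin_rationalForm_nondegenerate hA' fun h0 => hdet' (by rw [h0, Int.cast_zero])
  have he' (i) : ((p * (e i).valMinAbs : ℤ) : ℚ) ≠ 0 := Int.cast_ne_zero.mpr <|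
    mul_ne_zero (Nat.cast_ne_zero.mpr (Fact.out : p.Prime).ne_zero)
      (by simpa using ne_zero_of_anisotropic_weightedSumSquares he i)
  have hclass : of (rationalForm (fromBlocks A 0 0 (diagonal (-d)))) h' =
      of (weightedSumSquares ℚ fun i => ((p * (e i).valMinAbs : ℤ) : ℚ))
        (polarBilin_weightedSumSquares_nondegenerate he') := by
    rw [of_rationalForm_fromBlocks_diagonal (d := -d) h
      fun i => smoothIntegers.ne_zero (smoothIntegers.neg_mem (hd i)),
      of_weightedSumSquares he', sub_eq_iff_eq_add'.mp hsum]
    simp [intSymbol, symbol_neg]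
  have := isEmpty_of_isMetabolic hA' hdet' (by simpa using he) ((of_eq_of_iff _ _).mp hclass)
  simpa using hsub

theorem of_rationalForm_mem_smoothSubgroup (hA : A.IsSymm) (hdet : IsUnit A.det)
    (h : (rationalForm A).polarBilin.Nondegenerate) :
    of (rationalForm A) h ∈ smoothSubgroup intSymbol 0 := by
  obtain ⟨k, hk⟩ := exists_of_mem_smoothSubgroup h
  induction k with
  | zero => exact hk
  | succ k ih =>
    by_cases hp : k.Prime
    · have := Fact.mk hp
      exact ih (of_rationalForm_mem_smoothSubgroup_of_succ hA hdet h hk)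
    · exact ih (by rwa [smoothSubgroup_succ hp] at hk)

lemma smoothSubgroup_intSymbol_zero :
    smoothSubgroup intSymbol 0 ≤ AddSubgroup.zmultiples (symbol (1 : ℚ)) := by
  refine (AddSubgroup.closure_le _).mpr ?_
  rintro _ ⟨a, ha, rfl⟩
  have ha : a.natAbs = 1 := by simpa [smoothIntegers.mem_iff, Nat.smoothNumbers_zero] using ha
  obtain rfl | rfl := Int.natAbs_eq_iff.mp ha
  · simp [intSymbol, AddSubgroup.mem_zmultiples]
  · simp [intSymbol, symbol_neg, AddSubgroup.mem_zmultiples]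

theorem exists_zsmul_symbol_one_eq_of_rationalForm (hA : A.IsSymm) (hdet : IsUnit A.det)
    (h : (rationalForm A).polarBilin.Nondegenerate) :
    ∃ k : ℤ, k • symbol (1 : ℚ) = of (rationalForm A) h :=
  AddSubgroup.mem_zmultiples_iff.mp
    (smoothSubgroup_intSymbol_zero (of_rationalForm_mem_smoothSubgroup hA hdet h))

end WittGroup

end UnimodularClass

/-! ### Indefinite unimodular forms are isotropic -/

section Isotropic

open Module Matrix QuadraticMap

lemma not_anisotropic_of_isMetabolic_prod {K V V' : Type*} [Field K] [LinearOrder K]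
    [IsStrictOrderedRing K] [AddCommGroup V] [Module K V] [FiniteDimensional K V]
    [AddCommGroup V'] [Module K V'] [FiniteDimensional K V'] {Q : QuadraticForm K V}
    {Q' : QuadraticForm K V'} (h : IsMetabolic (Q.prod Q')) (hQ' : Q'.PosDef) {v : V}
    (hv : 0 < Q v) : ¬ Q.Anisotropic := by
  intro hQ
  obtain ⟨X, hX, hdim⟩ := h
  have hfst : Function.Injective ((LinearMap.fst K V V').domRestrict X) := by
    refine (injective_iff_map_eq_zero _).mpr fun x (hx : x.1.1 = 0) => ?_
    have := hX x x.2
    rw [prod_apply, hx, map_zero, zero_add] at this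
    exact Subtype.ext (Prod.ext hx (hQ'.anisotropic _ this))
  have hsnd : Function.Injective ((LinearMap.snd K V V').domRestrict X) := by
    refine (injective_iff_map_eq_zero _).mpr fun x (hx : x.1.2 = 0) => ?_
    have := hX x x.2
    rw [prod_apply, hx, map_zero, add_zero] at this
    exact Subtype.ext (Prod.ext (hQ _ this) hx)
  have hle := LinearMap.finrank_le_finrank_of_injective hfst
  have hle' := LinearMap.finrank_le_finrank_of_injective hsnd
  rw [finrank_prod] at hdim
  obtain ⟨x, rfl⟩ :=
    (LinearMap.injective_iff_surjective_of_finrank_eq_finrank (by lia)).mp hfst v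
  exact (add_pos_of_pos_of_nonneg hv (hQ'.nonneg x.1.2)).ne' (hX x x.2)

variable {κ : Type} [Fintype κ] [DecidableEq κ] {A : Matrix κ κ ℤ}

lemma exists_isMetabolic_rationalForm_prod (hA : A.IsSymm) (hdet : IsUnit A.det) :
    ∃ n : ℕ, IsMetabolic ((rationalForm A).prod (weightedSumSquares ℚ fun _ : Fin n => (1 : ℚ))) ∨
      IsMetabolic ((-rationalForm A).prod (weightedSumSquares ℚ fun _ : Fin n => (1 : ℚ))) := by
  have h := polarBilin_rationalForm_nondegenerate hA hdet.ne_zero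
  obtain ⟨k, hk⟩ := WittGroup.exists_zsmul_symbol_one_eq_of_rationalForm hA hdet h
  have hone (n : ℕ) := WittGroup.of_weightedSumSquares (w := fun _ : Fin n => (1 : ℚ))
    fun _ => one_ne_zero
  simp only [Finset.sum_const, Finset.card_univ, Fintype.card_fin] at hone
  obtain ⟨n, rfl | rfl⟩ := Int.eq_nat_or_neg k
  · rw [natCast_zsmul, ← hone, eq_comm, WittGroup.of_eq_of_iff] at hk
    exact ⟨n, .inr (by simpa [neg_prod_eq_prod_neg] using hk.neg)⟩
  · rw [neg_smul, natCast_zsmul, ← hone, neg_eq_iff_add_eq_zero, add_comm, ← WittGroup.of_prod,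
      WittGroup.of_eq_zero_iff] at hk
    exact ⟨n, .inl hk⟩

lemma posDef_weightedSumSquares_one {K ι : Type*} [Field K] [LinearOrder K]
    [IsStrictOrderedRing K] [Fintype ι] : (weightedSumSquares K fun _ : ι => (1 : K)).PosDef := by
  intro x hx
  obtain ⟨i, hi⟩ := Function.ne_iff.mp hx
  rw [weightedSumSquares_apply]
  exact Finset.sum_pos' (fun j _ => by simpa using mul_self_nonneg (x j))
    ⟨i, Finset.mem_univ i, by simpa using mul_self_pos.mpr hi⟩

lemma not_anisotropic_rationalForm (hA : A.IsSymm) (hdet : IsUnit A.det)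
    (hpos : ∃ v, 0 < v ⬝ᵥ A *ᵥ v) (hneg : ∃ v, v ⬝ᵥ A *ᵥ v < 0) :
    ¬ (rationalForm A).Anisotropic := by
  obtain ⟨n, h | h⟩ := exists_isMetabolic_rationalForm_prod hA hdet
  · obtain ⟨v, hv⟩ := hpos
    exact not_anisotropic_of_isMetabolic_prod h posDef_weightedSumSquares_one
      (v := fun i => (v i : ℚ)) (by rw [rationalForm_intCast]; exact_mod_cast hv)
  · obtain ⟨v, hv⟩ := hneg
    intro hA'
    refine not_anisotropic_of_isMetabolic_prod h posDef_weightedSumSquares_one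
      (v := fun i => (v i : ℚ)) ?_ fun x hx => hA' x (by simpa using hx)
    rw [_root_.neg_apply, rationalForm_intCast]
    exact_mod_cast neg_pos.mpr hv

theorem exists_ne_zero_dotProduct_mulVec_eq_zero (hA : A.IsSymm) (hdet : IsUnit A.det)
    (hpos : ∃ v, 0 < v ⬝ᵥ A *ᵥ v) (hneg : ∃ v, v ⬝ᵥ A *ᵥ v < 0) :
    ∃ x : κ → ℤ, x ≠ 0 ∧ x ⬝ᵥ A *ᵥ x = 0 := by
  have := not_anisotropic_rationalForm hA hdet hpos hneg
  simp only [Anisotropic, not_forall] at this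
  obtain ⟨x, hx, hx0⟩ := this
  have := isLocalizedModule_compLeft (nonZeroDivisors ℤ) (Algebra.linearMap ℤ ℚ) κ
  obtain ⟨⟨y, c⟩, hy⟩ := IsLocalizedModule.surj (nonZeroDivisors ℤ)
    ((Algebra.linearMap ℤ ℚ).compLeft κ) x
  have hy : ((c : ℤ) : ℚ) • x = fun i => (y i : ℚ) := by
    rw [Int.cast_smul_eq_zsmul]
    exact hy
  refine ⟨y, ?_, ?_⟩
  · rintro rfl
    refine smul_ne_zero (Int.cast_ne_zero.mpr (nonZeroDivisors.ne_zero c.2)) hx0 (hy.trans ?_)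
    ext
    simp
  · have := rationalForm_intCast A y
    rw [← hy, QuadraticMap.map_smul, hx, smul_zero] at this
    exact_mod_cast this.symm

theorem exists_ne_zero_apply_self_eq_zero {L : Type*} [AddCommGroup L] [Module ℤ L]
    [Module.Free ℤ L] [Module.Finite ℤ L] {B : L →ₗ[ℤ] L →ₗ[ℤ] ℤ} (hsymm : ∀ x y, B x y = B y x)
    (hB : Function.Bijective B) (hpos : ∃ x, 0 < B x x) (hneg : ∃ x, B x x < 0) :
    ∃ x, x ≠ 0 ∧ B x x = 0 := by
  let b := finBasis ℤ L
  have hBA (x : L) : B x x = b.repr x ⬝ᵥ LinearMap.toMatrix₂ b b B *ᵥ b.repr x :=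
    apply_eq_dotProduct_toMatrix₂_mulVec b b B x x
  have hA : (LinearMap.toMatrix₂ b b B).IsSymm := by
    ext i j
    simp [LinearMap.toMatrix₂_apply, hsymm (b j)]
  have hdet : IsUnit (LinearMap.toMatrix₂ b b B).det := by
    have : LinearMap.toMatrix₂ b b B = LinearMap.toMatrix b b.dualBasis B := by
      ext i j
      simp [LinearMap.toMatrix₂_apply, LinearMap.toMatrix_apply, hsymm (b j)]
    rw [this]
    exact LinearEquiv.isUnit_det (LinearEquiv.ofBijective B hB) b b.dualBasis
  simp only [hBA] at hpos hneg
  obtain ⟨x, hx, hx0⟩ := exists_ne_zero_dotProduct_mulVec_eq_zero hA hdet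
    (hpos.imp' _ fun _ => id) (hneg.imp' _ fun _ => id)
  refine ⟨b.equivFun.symm x, b.equivFun.symm.map_ne_zero_iff.mpr hx, ?_⟩
  have : b.repr (b.equivFun.symm x) = x := b.equivFun.apply_symm_apply x
  rw [hBA, this, hx0]

end Isotropic

/-! ### Splitting off vectors of unit square -/

section Splitting

open Module Submodule

lemma isCompl_span_singleton_ker {R L : Type*} [CommRing R] [AddCommGroup L] [Module R L]
    {f : L →ₗ[R] R} {e : L} (he : IsUnit (f e)) : IsCompl (R ∙ e) (LinearMap.ker f) := by
  refine ⟨disjoint_def.mpr fun x hx hfx => ?_, codisjoint_iff_exists_add_eq.mpr fun x => ?_⟩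
  · obtain ⟨c, rfl⟩ := mem_span_singleton.mp hx
    rw [LinearMap.mem_ker, map_smul, smul_eq_mul, he.mul_left_eq_zero] at hfx
    rw [hfx, zero_smul]
  · obtain ⟨c, hc⟩ := he.dvd (a := f x)
    refine ⟨c • e, x - c • e, smul_mem _ _ (mem_span_singleton_self e), ?_, by abel⟩
    simp [hc, mul_comm]

lemma finrank_ker_lt {R L : Type*} [CommRing R] [IsDomain R] [AddCommGroup L] [Module R L]
    [Module.Finite R L] {f : L →ₗ[R] R} {e : L} (he : IsUnit (f e)) :
    finrank R (LinearMap.ker f) < finrank R L := by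
  have hf : Function.Surjective f :=
    LinearMap.range_eq_top.mp (Ideal.eq_top_of_isUnit_mem _ ⟨e, rfl⟩ he)
  rw [← (LinearMap.ker f).finrank_quotient_add_finrank,
    (f.quotKerEquivOfSurjective hf).finrank_eq, finrank_self]
  lia

variable {R L : Type*} [CommRing R] [AddCommGroup L] [Module R L] {B : L →ₗ[R] L →ₗ[R] R}

/-- The restriction of `B` to the orthogonal complement `e^⊥ = ker (B e)`. -/
abbrev orthogonalRestrict (B : L →ₗ[R] L →ₗ[R] R) (e : L) :
    LinearMap.ker (B e) →ₗ[R] LinearMap.ker (B e) →ₗ[R] R :=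
  B.domRestrict₁₂ _ _

/-- A bilinear form is unit-diagonalizable if it is diagonal, with units on the diagonal, in some
finite basis. Over `ℤ` this says that it is isomorphic to some `p⟨1⟩ ⊕ q⟨−1⟩`. -/
def IsUnitDiagonalizable (B : L →ₗ[R] L →ₗ[R] R) : Prop :=
  ∃ (n : ℕ) (b : Basis (Fin n) R L), B.IsOrthoᵢ b ∧ ∀ i, IsUnit (B (b i) (b i))

lemma IsUnitDiagonalizable.of_subsingleton [Subsingleton L] : IsUnitDiagonalizable B :=
  ⟨0, Basis.empty L, fun i => i.elim0, fun i => i.elim0⟩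

lemma IsUnitDiagonalizable.of_orthogonalRestrict (hsymm : ∀ x y, B x y = B y x) {e : L}
    (he : IsUnit (B e e)) (h : IsUnitDiagonalizable (orthogonalRestrict B e)) :
    IsUnitDiagonalizable B := by
  obtain ⟨n, b, hb, hunit⟩ := h
  have hcompl := isCompl_span_singleton_ker he
  let b' : Basis (Fin (n + 1)) R L := Basis.mkFinCons e b
    (fun c x hx h => by
      have : B e (c • e + x) = 0 := by rw [h, map_zero]
      rwa [map_add, hx, add_zero, map_smul, smul_eq_mul, he.mul_left_eq_zero] at this)
    (fun z => by
      obtain ⟨y, x, hy, hx, rfl⟩ := codisjoint_iff_exists_add_eq.mp hcompl.codisjoint z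
      obtain ⟨c, rfl⟩ := mem_span_singleton.mp hy
      exact ⟨-c, by simpa using hx⟩)
  have hb' : (b' : Fin (n + 1) → L) = Fin.cons e fun i => (b i : L) := Basis.coe_mkFinCons ..
  refine ⟨n + 1, b', fun i j hij => ?_, Fin.cases ?_ fun i => ?_⟩
  · rw [Function.onFun, hb']
    induction i using Fin.cases <;> induction j using Fin.cases
    · exact absurd rfl hij
    · exact (b _).2
    · exact (hsymm _ _).trans (b _).2
    · exact hb (by simpa using hij)
  · rwa [hb']
  · rw [hb']
    exact hunit i

lemma bijective_orthogonalRestrict (hsymm : ∀ x y, B x y = B y x) (hB : Function.Bijective B)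
    {e : L} (he : IsUnit (B e e)) : Function.Bijective (orthogonalRestrict B e) := by
  have hcompl := (isCompl_span_singleton_ker he).symm
  let π := (LinearMap.ker (B e)).projectionOnto _ hcompl
  have hπ (x : LinearMap.ker (B e)) (y : L) : B x (π y) = B x y := by
    obtain ⟨c, hc⟩ := mem_span_singleton.mp ((R ∙ e).projectionOnto _ hcompl.symm y).2
    have hx : B x e = 0 := (hsymm _ _).trans x.2
    nth_rw 2 [← projection_add_projection_eq_self hcompl y]
    rw [map_add, projection_apply, projection_apply, ← hc, map_smul, hx, smul_zero, add_zero]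
  refine ⟨(injective_iff_map_eq_zero _).mpr fun x hx => ?_, fun φ => ?_⟩
  · refine Subtype.ext ((injective_iff_map_eq_zero _).mp hB.1 x (LinearMap.ext fun y => ?_))
    exact (hπ x y).symm.trans (LinearMap.congr_fun hx (π y))
  · obtain ⟨z, hz⟩ := hB.2 (φ ∘ₗ π)
    refine ⟨π z, LinearMap.ext fun x => ?_⟩
    have := LinearMap.congr_fun hz x
    rw [LinearMap.comp_apply, projectionOnto_apply_left] at this
    exact (hsymm _ _).trans ((hπ x z).trans ((hsymm _ _).trans this))

lemma subsingleton_of_forall_apply_self_eq_zero [IsAddTorsionFree R]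
    (hsymm : ∀ x y, B x y = B y x) (hB : Function.Injective B) (h : ∀ x, B x x = 0) :
    Subsingleton L :=
  subsingleton_of_forall_eq 0 fun x => (injective_iff_map_eq_zero _).mp hB x <|
    LinearMap.ext fun y => self_eq_neg.mp <|
      (hsymm x y).trans ((LinearMap.IsAlt.neg h x y).symm)

end Splitting

/-! ### Odd indefinite forms -/

section OddIndefinite

open Module Submodule

lemma exists_eq_smul_and_apply_eq_one {R L : Type*} [CommRing R] [IsDomain R]
    [IsPrincipalIdealRing R] [AddCommGroup L] [Module R L] {f : L →ₗ[R] R} (hf : f ≠ 0) :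
    ∃ (d : R) (g : L →ₗ[R] R) (y : L), d ≠ 0 ∧ f = d • g ∧ g y = 1 := by
  obtain ⟨d, hd⟩ := (IsPrincipalIdealRing.principal (LinearMap.range f)).principal
  have hd0 : d ≠ 0 := by
    rintro rfl
    exact hf (LinearMap.range_eq_bot.mp (hd.trans (span_zero_singleton R)))
  obtain ⟨y, hy⟩ : d ∈ LinearMap.range f := hd ▸ mem_span_singleton_self d
  let g := (LinearEquiv.toSpanNonzeroSingleton R R d hd0).symm.toLinearMap ∘ₗ
    f.codRestrict (R ∙ d) fun x => hd ▸ LinearMap.mem_range_self f x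
  have hfg : f = d • g := by
    ext x
    have := congrArg Subtype.val ((LinearEquiv.toSpanNonzeroSingleton R R d hd0).apply_symm_apply
      ⟨f x, hd ▸ LinearMap.mem_range_self f x⟩)
    rw [LinearEquiv.toSpanNonzeroSingleton_apply] at this
    exact this.symm.trans (mul_comm _ _)
  refine ⟨d, g, y, hd0, hfg, mul_left_cancel₀ hd0 ?_⟩
  rw [mul_one, ← smul_eq_mul, ← LinearMap.smul_apply, ← hfg, hy]

lemma exists_isotropic_apply_eq_one {R L : Type*} [CommRing R] [IsDomain R]
    [IsPrincipalIdealRing R] [AddCommGroup L] [Module R L] {B : L →ₗ[R] L →ₗ[R] R}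
    (hB : Function.Bijective B) {x : L} (hx : x ≠ 0) (hxx : B x x = 0) :
    ∃ z y, B z z = 0 ∧ B z y = 1 := by
  obtain ⟨d, g, y, hd, hg, hy⟩ :=
    exists_eq_smul_and_apply_eq_one ((map_ne_zero_iff B hB.1).mpr hx)
  obtain ⟨z, rfl⟩ := hB.2 g
  obtain rfl : x = d • z := hB.1 (hg.trans (map_smul B d z).symm)
  refine ⟨z, y, ?_, hy⟩
  simpa [hd] using hxx

lemma exists_orthogonal_pair {R L : Type*} [CommRing R] [AddCommGroup L] [Module R L]
    {B : L →ₗ[R] L →ₗ[R] R} (hsymm : ∀ x y, B x y = B y x) {x y : L} (hxx : B x x = 0)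
    (hxy : B x y = 1) (hyy : Odd (B y y)) : ∃ u v, B u u = 1 ∧ B v v = -1 ∧ B u v = 0 := by
  obtain ⟨m, hm⟩ := hyy
  refine ⟨y - m • x, y - m • x - x, ?_, ?_, ?_⟩ <;>
  · simp only [map_sub, map_smul, LinearMap.sub_apply, LinearMap.smul_apply, smul_eq_mul,
      hsymm y x, hxy, hxx, hm]
    ring

lemma exists_apply_eq_one_and_odd {R L : Type*} [CommRing R] [AddCommGroup L] [Module R L]
    {B : L →ₗ[R] L →ₗ[R] R} (hsymm : ∀ x y, B x y = B y x) {x y z : L} (hxy : B x y = 1)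
    (hy : Even (B y y)) (hz : Odd (B z z)) : ∃ y', B x y' = 1 ∧ Odd (B y' y') := by
  refine ⟨z + (1 - B x z) • y, by simp [hxy], ?_⟩
  have : B (z + (1 - B x z) • y) (z + (1 - B x z) • y) =
      B z z + 2 * ((1 - B x z) * B y z) + (1 - B x z) ^ 2 * B y y := by
    simp only [map_add, map_smul, LinearMap.add_apply, LinearMap.smul_apply, smul_eq_mul,
      hsymm z y]
    ring
  rw [this]
  exact (hz.add_even (even_two_mul _)).add_even (hy.mul_left _)

section Ordered

variable {R L : Type*} [CommRing R] [LinearOrder R] [IsStrictOrderedRing R] [AddCommGroup L]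
  [Module R L] {B : L →ₗ[R] L →ₗ[R] R}

lemma isUnitDiagonalizable_of_semidefinite_orthogonal (hsymm : ∀ x y, B x y = B y x)
    (hB : Function.Bijective B) {u v : L} (hu : B u u = 1) (hv : B v v = -1) (huv : B u v = 0)
    (hnonpos : ∀ w, B u w = 0 → B w w ≤ 0) (hnonneg : ∀ w, B v w = 0 → 0 ≤ B w w) :
    IsUnitDiagonalizable B := by
  have hu : IsUnit (B u u) := by simp [hu]
  let v' : LinearMap.ker (B u) := ⟨v, huv⟩
  have hv' : IsUnit (orthogonalRestrict B u v' v') :=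
    (hv : orthogonalRestrict B u v' v' = -1) ▸ isUnit_one.neg
  have hsymm' (x y) : orthogonalRestrict B u x y = orthogonalRestrict B u y x := hsymm x y
  have hbij := bijective_orthogonalRestrict hsymm' (bijective_orthogonalRestrict hsymm hB hu) hv'
  have : Subsingleton (LinearMap.ker (orthogonalRestrict B u v')) :=
    subsingleton_of_forall_apply_self_eq_zero (fun x y => hsymm' x y) hbij.1
      fun w => (hnonpos w w.1.2).antisymm (hnonneg w w.2)
  exact .of_orthogonalRestrict hsymm hu (.of_orthogonalRestrict hsymm' hv' .of_subsingleton)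

lemma isUnitDiagonalizable_or_exists_odd_indefinite_orthogonalRestrict
    (hsymm : ∀ x y, B x y = B y x) (hB : Function.Bijective B) {u v : L} (hu : B u u = 1)
    (hv : B v v = -1) (huv : B u v = 0) :
    IsUnitDiagonalizable B ∨ ∃ e, IsUnit (B e e) ∧ (∃ x, Odd (orthogonalRestrict B e x x)) ∧
      (∃ x, 0 < orthogonalRestrict B e x x) ∧ ∃ x, orthogonalRestrict B e x x < 0 := by
  by_cases hpos : ∃ w, B u w = 0 ∧ 0 < B w w
  · obtain ⟨w, huw, hw⟩ := hpos
    have hodd : Odd (B v v) := hv ▸ odd_one.neg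
    have hneg : B v v < 0 := hv ▸ neg_one_lt_zero
    exact .inr ⟨u, by simp [hu], ⟨⟨v, huv⟩, hodd⟩, ⟨⟨w, huw⟩, hw⟩, ⟨⟨v, huv⟩, hneg⟩⟩
  by_cases hneg : ∃ w, B v w = 0 ∧ B w w < 0
  · obtain ⟨w, hvw, hw⟩ := hneg
    have hvu : B v u = 0 := hsymm u v ▸ huv
    have hodd : Odd (B u u) := hu ▸ odd_one
    have hpos : 0 < B u u := hu ▸ one_pos
    exact .inr ⟨v, by simp [hv], ⟨⟨u, hvu⟩, hodd⟩, ⟨⟨u, hvu⟩, hpos⟩, ⟨⟨w, hvw⟩, hw⟩⟩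
  push Not at hpos hneg
  exact .inl (isUnitDiagonalizable_of_semidefinite_orthogonal hsymm hB hu hv huv hpos hneg)

end Ordered

variable {L : Type*} [AddCommGroup L] [Module ℤ L] {B : L →ₗ[ℤ] L →ₗ[ℤ] ℤ}

lemma exists_orthogonal_pair_of_odd_of_indefinite [Module.Free ℤ L] [Module.Finite ℤ L]
    (hsymm : ∀ x y, B x y = B y x) (hB : Function.Bijective B) (hodd : ∃ x, Odd (B x x))
    (hpos : ∃ x, 0 < B x x) (hneg : ∃ x, B x x < 0) :
    ∃ u v, B u u = 1 ∧ B v v = -1 ∧ B u v = 0 := by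
  obtain ⟨x, hx, hxx⟩ := exists_ne_zero_apply_self_eq_zero hsymm hB hpos hneg
  obtain ⟨z, y, hzz, hzy⟩ := exists_isotropic_apply_eq_one hB hx hxx
  obtain hy | hy := (B y y).even_or_odd
  · obtain ⟨w, hw⟩ := hodd
    obtain ⟨y', hzy', hy'⟩ := exists_apply_eq_one_and_odd hsymm hzy hy hw
    exact exists_orthogonal_pair hsymm hzz hzy' hy'
  · exact exists_orthogonal_pair hsymm hzz hzy hy

theorem isUnitDiagonalizable_of_odd_of_indefinite {L : Type*} [AddCommGroup L] [Module ℤ L]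
    [Module.Free ℤ L] [Module.Finite ℤ L] {B : L →ₗ[ℤ] L →ₗ[ℤ] ℤ}
    (hsymm : ∀ x y, B x y = B y x) (hB : Function.Bijective B) (hodd : ∃ x, Odd (B x x))
    (hpos : ∃ x, 0 < B x x) (hneg : ∃ x, B x x < 0) : IsUnitDiagonalizable B := by
  induction hn : finrank ℤ L using Nat.strong_induction_on generalizing L with
  | _ n ih =>
  subst hn
  obtain ⟨u, v, hu, hv, huv⟩ := exists_orthogonal_pair_of_odd_of_indefinite hsymm hB hodd hpos hneg
  obtain h | ⟨e, he, hodd', hpos', hneg'⟩ :=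
    isUnitDiagonalizable_or_exists_odd_indefinite_orthogonalRestrict hsymm hB hu hv huv
  · exact h
  · -- Instance search would find the `ℤ`-action `AddCommGroup.toIntModule` on `e^⊥`, which is not
    -- definitionally the one inherited from `L`.
    exact .of_orthogonalRestrict hsymm he <|
      @ih _ (finrank_ker_lt he) (LinearMap.ker (B e)) _ (Submodule.module _) _ _ _
        (fun x y => hsymm x y) (bijective_orthogonalRestrict hsymm hB he) hodd' hpos' hneg' rfl

lemma IsUnitDiagonalizable.exists_basis_sum (h : IsUnitDiagonalizable B) :
    ∃ (p q : ℕ) (b : Basis (Fin p ⊕ Fin q) ℤ L), B.IsOrthoᵢ b ∧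
      (∀ i, B (b (.inl i)) (b (.inl i)) = 1) ∧ ∀ j, B (b (.inr j)) (b (.inr j)) = -1 := by
  obtain ⟨n, b, hb, hunit⟩ := h
  let e := ((Fintype.equivFin {i // B (b i) (b i) = 1}).symm.sumCongr
    (Fintype.equivFin {i // ¬ B (b i) (b i) = 1}).symm).trans (Equiv.sumCompl _)
  refine ⟨_, _, b.reindex e.symm, fun i j hij => ?_, fun i => ?_, fun j => ?_⟩
  · simpa [Function.onFun] using hb (e.injective.ne hij)
  · simpa using! ((Fintype.equivFin {i // B (b i) (b i) = 1}).symm i).2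
  · have := ((Fintype.equivFin {i // ¬ B (b i) (b i) = 1}).symm j).2
    simpa using! (Int.isUnit_iff.mp (hunit _)).resolve_left this

lemma apply_eq_sum_of_isOrthoᵢ {R L ι : Type*} [CommRing R] [AddCommGroup L] [Module R L]
    [Fintype ι] {B : L →ₗ[R] L →ₗ[R] R} {b : Basis ι R L} (hb : B.IsOrthoᵢ b) (x y : L) :
    B x y = ∑ i, B (b i) (b i) * (b.repr x i * b.repr y i) := by
  conv_lhs => rw [← b.sum_repr x, ← b.sum_repr y]
  simp only [map_sum, map_smul, LinearMap.sum_apply, LinearMap.smul_apply, smul_eq_mul]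
  refine Finset.sum_congr rfl fun i _ => ?_
  rw [Finset.sum_eq_single_of_mem i (Finset.mem_univ i) fun j _ hij => by
    rw [LinearMap.isOrthoᵢ_def.mp hb _ _ hij, mul_zero]]
  ring

end OddIndefinite

open Finset in
/-- **Milnor–Husemoller/Serre.** Every odd indefinite unimodular symmetric
bilinear form over `ℤ` is isomorphic to a diagonal form `p⟨1⟩ ⊕ q⟨−1⟩` for some
non-negative integers `p, q`: there is a `ℤ`-linear isomorphism
`L ≃ (Fin p → ℤ) × (Fin q → ℤ)` carrying `B` to the standard diagonal form with `p`
entries `+1` and `q` entries `−1`. -/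
theorem odd_indefinite_unimodular_diagonalizable
    (L : Type*) [AddCommGroup L] [Module ℤ L] [Module.Free ℤ L] [Module.Finite ℤ L]
    (B : L →ₗ[ℤ] L →ₗ[ℤ] ℤ)
    (hsymm : ∀ x y : L, B x y = B y x)
    -- unimodularity: the associated map `L → Hom(L, ℤ)` is an isomorphism
    (hunimod : Function.Bijective B)
    -- odd: `B x x` is odd for some `x`
    (hodd : ∃ x : L, Odd (B x x))
    -- indefinite: `B x x` takes both positive and negative values
    (hindef : (∃ x : L, 0 < B x x) ∧ (∃ x : L, B x x < 0)) :
    ∃ (p q : ℕ) (e : L ≃ₗ[ℤ] (Fin p → ℤ) × (Fin q → ℤ)),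
      ∀ x y : L, B x y = (∑ i, (e x).1 i * (e y).1 i) - ∑ j, (e x).2 j * (e y).2 j := by
  obtain ⟨p, q, b, hb, hpos, hneg⟩ := (isUnitDiagonalizable_of_odd_of_indefinite hsymm hunimod hodd
    hindef.1 hindef.2).exists_basis_sum
  refine ⟨p, q, b.equivFun.trans (LinearEquiv.sumArrowLequivProdArrow _ _ ℤ ℤ), fun x y => ?_⟩
  rw [apply_eq_sum_of_isOrthoᵢ hb, Fintype.sum_sum_type]
  simp [hpos, hneg, sub_eq_add_neg]
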